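/- For a permutation $\pi=\pi(1)\pi(2)\cdots\pi(n)$ of $[n]=\{1,\dots,n\}$, a descent is an index $i\in\{1,\dots,n-1\}$ with $\pi(i)>\pi(i+1)$, and a peak is an index $i\in\{2,\dots,n-1\}$ with $\pi(i-1)<\pi(i)>\pi(i+1)$; the cycle type of $\pi$ is the partition of $n$ formed by its cycle lengths, fixed points included. Let $n\ge 1$ and let $\lambda$ be a partition of $n$ such that no part of $\lambda$ is congruent to $2$ modulo $4$ and every odd part of $\lambda$ occurs exactly once. Then for all integers $j,k\ge 0$, the number of permutations of $[n]$ with cycle type $\lambda$ having exactly $j$ peaks and exactly $k$ descents equals the number of permutations of $[n]$ with cycle type $\lambda$ having exactly $j$ peaks and exactly $n-1-k$ descents (both numbers are $0$ when $k\ge n$). -/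

import Mathlib

/-- The letter `π(i)` of the one-line notation `π(1)π(2)⋯π(n)` of a permutation of
`[n] = {1, …, n}`, realized on `Fin n` by `i ↦ i - 1`. It is only used for `1 ≤ i ≤ n`; the value
elsewhere is `0`. -/
def oneLine (n : ℕ) (π : Equiv.Perm (Fin n)) (i : ℕ) : ℕ :=
  if h : 1 ≤ i ∧ i ≤ n then (π ⟨i - 1, by omega⟩).val + 1 else 0

/-- The number of descents: indices `1 ≤ i ≤ n - 1` with `π(i) > π(i+1)`. -/
def des (n : ℕ) (π : Equiv.Perm (Fin n)) : ℕ :=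
  ((Finset.Icc 1 (n - 1)).filter fun i => oneLine n π i > oneLine n π (i + 1)).card

/-- The number of peaks: indices `2 ≤ i ≤ n - 1` with `π(i-1) < π(i) > π(i+1)`. -/
def pk (n : ℕ) (π : Equiv.Perm (Fin n)) : ℕ :=
  ((Finset.Icc 2 (n - 1)).filter fun i =>
    oneLine n π (i - 1) < oneLine n π i ∧ oneLine n π i > oneLine n π (i + 1)).card

/-!
The descent set (resp. ascent set) of `π` is contained in `D` iff `π` is increasing (resp.
decreasing) on the blocks of `[n]` cut after the elements of `D`, that is, on the fibres of a
monotone colouring. Reading colours along the cycles of `π` attaches a necklace to each cycle, as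
in the Gessel–Reutenauer bijection. If `π` is monotone on the fibres and no cycle length is
`2` modulo `4`, all its necklaces are primitive. Conversely, sorting the points by the words they
read, twisted by the sign `ε ^ k` in position `k`, conjugates any `π` with primitive necklaces by a
colour-preserving permutation to one that is increasing (`ε = 1`) or decreasing (`ε = -1`) on the
fibres; ties only occur between cycles of equal length, hence of even length, which allows them to
be broken consistently along the cycles. This normal form is unique, so as many permutations of
the given cycle type have descent set inside `D` as have ascent set inside `D`, and descent sets
and ascent sets are equidistributed. Conjugation by `i ↦ n + 1 - i` preserves cycle type and
descents, and turns valleys into peaks.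
-/

open Equiv Function

/-! ### Signed orders -/

section SignLT

variable {α β : Type*} [LinearOrder α] [LinearOrder β] {ε δ : ℤˣ} {a b c : α}

/-- The strict order of `α` for `ε = 1` and its reverse for `ε = -1`, so that ascents and descents
can be treated at once. -/
def SignLT (ε : ℤˣ) (a b : α) : Prop :=
  if ε = 1 then a < b else b < a

instance : Decidable (SignLT ε a b) :=
  inferInstanceAs (Decidable (if ε = 1 then a < b else b < a))

@[simp]
theorem signLT_one : SignLT 1 a b ↔ a < b := by
  simp [SignLT]

@[simp]
theorem signLT_neg : SignLT (-ε) a b ↔ SignLT ε b a := by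
  rcases Int.units_eq_one_or ε with rfl | rfl <;> simp [SignLT]

theorem signLT_iff_mul_lt_mul {a b : ℤ} : SignLT ε a b ↔ (ε : ℤ) * a < ε * b := by
  rcases Int.units_eq_one_or ε with rfl | rfl <;> simp

theorem SignLT.ne (h : SignLT ε a b) : a ≠ b := by
  rcases Int.units_eq_one_or ε with rfl | rfl <;> simp only [signLT_neg, signLT_one] at h
  exacts [h.ne, h.ne']

theorem SignLT.asymm (h : SignLT ε a b) : ¬ SignLT ε b a := by
  rcases Int.units_eq_one_or ε with rfl | rfl <;> simp only [signLT_neg, signLT_one] at h ⊢ <;>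
    exact h.asymm

theorem SignLT.trans (hab : SignLT ε a b) (hbc : SignLT ε b c) : SignLT ε a c := by
  rcases Int.units_eq_one_or ε with rfl | rfl <;> simp only [signLT_neg, signLT_one] at *
  exacts [hab.trans hbc, hbc.trans hab]

theorem signLT_or_signLT_of_ne (ε : ℤˣ) (h : a ≠ b) : SignLT ε a b ∨ SignLT ε b a := by
  rcases Int.units_eq_one_or ε with rfl | rfl <;> simp only [signLT_neg, signLT_one]
  exacts [h.lt_or_gt, h.symm.lt_or_gt]

theorem SignLT.not_signLT_of_monotone {f : α → β} (hf : Monotone f) (h : SignLT ε a b) :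
    ¬ SignLT ε (f b) (f a) := by
  rcases Int.units_eq_one_or ε with rfl | rfl <;> simp only [signLT_neg, signLT_one] at * <;>
    exact (hf h.le).not_gt

theorem signLT_apply_iff_of_strictMono {f : α → β} (hf : StrictMono f) :
    SignLT ε (f a) (f b) ↔ SignLT ε a b := by
  rcases Int.units_eq_one_or ε with rfl | rfl <;> simp [hf.lt_iff_lt]

theorem signLT_toLex_iff {x y : β} :
    SignLT ε (toLex (a, x)) (toLex (b, y)) ↔ SignLT ε a b ∨ a = b ∧ SignLT ε x y := by
  rcases Int.units_eq_one_or ε with rfl | rfl <;> simp [Prod.Lex.toLex_lt_toLex, eq_comm]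

end SignLT

/-! ### Words and primitive colourings -/

section ColorWord

variable {α β : Type*} {f : α → β} {π : Perm α} {x y : α}

/-- The bi-infinite word of the colours `f` met along the cycle of `π` through `x`, starting
at `x`. -/
def colorWord (f : α → β) (π : Perm α) (x : α) : ℤ → β :=
  fun k => f ((π ^ k) x)

/-- The colouring `f` makes a primitive necklace out of each cycle of `π`: a nontrivial rotation of
a cycle changes its word. -/
def IsPrimitiveColoring (f : α → β) (π : Perm α) : Prop :=
  ∀ ⦃x y⦄, π.SameCycle x y → colorWord f π x = colorWord f π y → x = y

/-- The shift of bi-infinite words, for which `colorWord f π` intertwines `π` with `wordShift`. -/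
def wordShift : Perm (ℤ → β) :=
  (Equiv.subRight 1).arrowCongr (Equiv.refl β)

theorem wordShift_zpow_apply (w : ℤ → β) (k i : ℤ) : (wordShift ^ k) w i = w (i + k) := by
  induction k generalizing i w with
  | zero => simp
  | succ k ih => rw [zpow_add_one, Perm.mul_apply, ih]; simp [wordShift, add_assoc]
  | pred k ih =>
    rw [zpow_sub_one, Perm.mul_apply, ih]
    simp [wordShift, Perm.inv_def, sub_eq_add_neg, add_assoc]

theorem colorWord_zpow_apply (k : ℤ) :
    colorWord f π ((π ^ k) x) = (wordShift ^ k) (colorWord f π x) := by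
  funext i
  rw [wordShift_zpow_apply, colorWord, colorWord, zpow_add, Perm.mul_apply]

theorem colorWord_apply : colorWord f π (π x) = wordShift (colorWord f π x) := by
  simpa only [zpow_one] using colorWord_zpow_apply (f := f) (π := π) (x := x) 1

theorem colorWord_pow_apply (k : ℕ) :
    colorWord f π ((π ^ k) x) = (wordShift ^ k) (colorWord f π x) :=
  mod_cast colorWord_zpow_apply (f := f) (π := π) (x := x) k

/-- Words along a permutation of a finite set are periodic, so their nonnegative half suffices. -/
theorem colorWord_eq_iff_forall_nat [Finite α] {π' : Perm α} :
    colorWord f π x = colorWord f π' y ↔ ∀ k : ℕ, f ((π ^ k) x) = f ((π' ^ k) y) := by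
  refine ⟨fun h k => mod_cast congrFun h k, fun h => funext fun k => ?_⟩
  obtain ⟨j, hj⟩ := mem_powers_iff_mem_zpowers.2 ⟨k, (rfl : (π, π') ^ k = _)⟩
  obtain ⟨hπ, hπ'⟩ : π ^ j = π ^ k ∧ π' ^ j = π' ^ k := by simpa using hj
  rw [colorWord, colorWord, ← hπ, ← hπ', h]

theorem isPeriodicPt_iff_pow_apply_eq {k : ℕ} : IsPeriodicPt π k x ↔ (π ^ k) x = x := by
  rw [IsPeriodicPt, IsFixedPt, Perm.iterate_eq_pow]

theorem IsPrimitiveColoring.pow_apply_eq (h : IsPrimitiveColoring f π)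
    (hw : colorWord f π x = colorWord f π y) {k : ℕ} (hx : (π ^ k) x = x) : (π ^ k) y = y := by
  refine h (by simp [Perm.SameCycle.refl]) ?_
  rw [colorWord_pow_apply, ← hw, ← colorWord_pow_apply, hx]

theorem IsPrimitiveColoring.minimalPeriod_eq (h : IsPrimitiveColoring f π)
    (hw : colorWord f π x = colorWord f π y) : minimalPeriod π x = minimalPeriod π y := by
  simp only [minimalPeriod_eq_minimalPeriod_iff, isPeriodicPt_iff_pow_apply_eq]
  exact fun k => ⟨h.pow_apply_eq hw, h.pow_apply_eq hw.symm⟩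

end ColorWord

/-! ### Permutations monotone on the fibres of a colouring -/

section FiberMono

variable {α β : Type*} [LinearOrder α] {ε δ : ℤˣ} {f : α → β} {π π' : Perm α} {x y : α}

/-- `π` is increasing (for `ε = 1`) or decreasing (for `ε = -1`) on each fibre of `f`. -/
def FiberMono (ε : ℤˣ) (f : α → β) (π : Perm α) : Prop :=
  ∀ ⦃x y⦄, f x = f y → x < y → SignLT ε (π x) (π y)

theorem FiberMono.signLT_apply (h : FiberMono ε f π) (hf : f x = f y) (hxy : SignLT δ x y) :
    SignLT (ε * δ) (π x) (π y) := by
  rcases Int.units_eq_one_or δ with rfl | rfl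
  · rw [mul_one]
    exact h hf (signLT_one.1 hxy)
  · rw [mul_neg_one, signLT_neg]
    exact h hf.symm (by simpa using hxy)

theorem FiberMono.signLT_apply_iff (h : FiberMono ε f π) (hf : f x = f y) :
    SignLT ε (π x) (π y) ↔ x < y := by
  refine ⟨fun hlt => ?_, h hf⟩
  rcases lt_trichotomy x y with hxy | rfl | hyx
  exacts [hxy, absurd rfl hlt.ne, absurd (h hf.symm hyx) hlt.asymm]

theorem FiberMono.signLT_pow_apply (h : FiberMono ε f π) (hxy : x < y) {k : ℕ}
    (hf : ∀ j < k, f ((π ^ j) x) = f ((π ^ j) y)) :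
    SignLT (ε ^ k) ((π ^ k) x) ((π ^ k) y) := by
  induction k with
  | zero => simpa using hxy
  | succ k ih =>
    rw [pow_succ', pow_succ']
    exact h.signLT_apply (hf k k.lt_succ_self) (ih fun j hj => hf j (hj.trans k.lt_succ_self))

theorem apply_eq_self_of_strictMonoOn [WellFoundedLT α] {τ : Perm α} {S : Set α}
    (hS : ∀ y, τ y ∈ S ↔ y ∈ S) (hτ : StrictMonoOn τ S) (hx : x ∈ S) : τ x = x := by
  let e : S ≃o S := StrictMono.orderIsoOfSurjective (τ.subtypePerm hS)
    (fun y z hyz => hτ y.2 z.2 hyz) (τ.subtypePerm hS).surjective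
  have he : e = OrderIso.refl S := Subsingleton.elim _ _
  exact congrArg Subtype.val (DFunLike.congr_fun he ⟨x, hx⟩)

variable [Finite α]

/-- The points sharing the word of `x` are permuted by `π ^ k`, monotonically if `ε ^ k = 1`. -/
theorem FiberMono.pow_apply_eq_self (h : FiberMono ε f π) {k : ℕ} (hk : ε ^ k = 1)
    (hx : colorWord f π ((π ^ k) x) = colorWord f π x) : (π ^ k) x = x := by
  refine apply_eq_self_of_strictMonoOn (S := {y | colorWord f π y = colorWord f π x}) ?_ ?_ rfl
  · intro y
    change colorWord f π ((π ^ k) y) = colorWord f π x ↔ colorWord f π y = colorWord f π x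
    conv_lhs => rw [← hx, colorWord_pow_apply, colorWord_pow_apply]
    exact Equiv.apply_eq_iff_eq _
  · intro y hy z hz hyz
    have hw : colorWord f π y = colorWord f π z := hy.trans hz.symm
    simpa [hk] using h.signLT_pow_apply hyz (k := k) fun j _ => colorWord_eq_iff_forall_nat.1 hw j

/-- If a rotation by `k` preserves the word of `x`, then `2 * k` is a multiple of the cycle length
of `x`, which forces `k` to be one as well unless the cycle length is twice an odd number. -/
theorem FiberMono.isPrimitiveColoring (h : FiberMono ε f π)
    (h2 : ∀ x, ¬ minimalPeriod π x ≡ 2 [MOD 4]) : IsPrimitiveColoring f π := by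
  rintro x y hxy hw
  obtain ⟨k, rfl⟩ := hxy.exists_nat_pow_eq
  rcases Nat.even_or_odd k with hk | ⟨l, rfl⟩
  · exact (h.pow_apply_eq_self (by rcases Int.units_eq_one_or ε with rfl | rfl <;> simp [hk])
      hw.symm).symm
  · have hdvd : minimalPeriod π x ∣ (2 * l + 1) * 2 := by
      rw [← isPeriodicPt_iff_minimalPeriod_dvd, isPeriodicPt_iff_pow_apply_eq]
      refine h.pow_apply_eq_self (by rw [mul_comm, pow_mul, Int.units_sq, one_pow]) ?_
      rw [mul_two, pow_add, Perm.mul_apply, colorWord_pow_apply, ← hw, ← colorWord_pow_apply, ← hw]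
    have hodd : Odd (minimalPeriod π x) := by
      rw [← Nat.not_even_iff_odd]
      rintro ⟨m, hm⟩
      obtain ⟨c, hc⟩ := hdvd
      have hmc : 2 * l + 1 = m * c := by rw [hm] at hc; linarith
      have hm_odd : Odd m := Nat.Odd.of_mul_left (hmc ▸ odd_two_mul_add_one l)
      obtain ⟨a, rfl⟩ := hm_odd
      exact h2 x (by rw [hm, Nat.ModEq]; omega)
    rw [eq_comm, ← isPeriodicPt_iff_pow_apply_eq, isPeriodicPt_iff_minimalPeriod_dvd]
    exact (Nat.coprime_two_right.2 hodd).dvd_of_dvd_mul_right hdvd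

theorem FiberMono.eq_of_colorWord_eq (h : FiberMono ε f π) (h' : FiberMono ε f π')
    (hw : ∀ x, colorWord f π x = colorWord f π' x) : π = π' := by
  have hcolor : ∀ {y z}, colorWord f π y = colorWord f π z → f y = f z := fun hyz => by
    simpa using colorWord_eq_iff_forall_nat.1 hyz 0
  have hπ' : ∀ y, π' ((π'⁻¹ * π) y) = π y := fun y => by simp
  have hτ : ∀ y, colorWord f π ((π'⁻¹ * π) y) = colorWord f π y := fun y =>
    wordShift.injective <| by rw [hw, ← colorWord_apply, hπ', ← hw, colorWord_apply]
  rw [eq_comm, ← inv_mul_eq_one]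
  ext x
  refine apply_eq_self_of_strictMonoOn (S := {y | colorWord f π y = colorWord f π x}) ?_ ?_ rfl
  · exact fun y => Eq.congr_left (hτ y)
  · intro y hy z hz hyz
    have hw : colorWord f π y = colorWord f π z := hy.trans hz.symm
    rw [← h'.signLT_apply_iff (hcolor (by rw [hτ, hτ, hw])), hπ', hπ']
    exact h (hcolor hw) hyz

end FiberMono

/-! ### Uniqueness of the normal form -/

section SignedWord

variable {α : Type*} {ε δ : ℤˣ} {f : α → ℤ} {π : Perm α} {x y : α}

/-- The forward colour word of `x` twisted by the powers of `ε` and ordered lexicographically.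
The twist turns the reversal of the order under each step of a decreasing `π` into a
consistent order. -/
def signedWord (ε : ℤˣ) (f : α → ℤ) (π : Perm α) (x : α) : Lex (ℕ → ℤ) :=
  toLex fun k => ((ε ^ k : ℤˣ) : ℤ) * f ((π ^ k) x)

theorem signedWord_eq_iff [Finite α] {π' : Perm α} :
    signedWord ε f π x = signedWord ε f π' y ↔ colorWord f π x = colorWord f π' y := by
  rw [signedWord, signedWord, toLex_inj, funext_iff, colorWord_eq_iff_forall_nat]
  exact forall_congr' fun k => mul_right_inj' (Units.ne_zero _)

theorem signLT_signedWord_iff :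
    SignLT δ (signedWord ε f π x) (signedWord ε f π y) ↔
      ∃ i, (∀ j < i, f ((π ^ j) x) = f ((π ^ j) y)) ∧
        SignLT (δ * ε ^ i) (f ((π ^ i) x)) (f ((π ^ i) y)) := by
  have lt_iff : ∀ x y, signedWord ε f π x < signedWord ε f π y ↔
      ∃ i, (∀ j < i, f ((π ^ j) x) = f ((π ^ j) y)) ∧
        SignLT (ε ^ i) (f ((π ^ i) x)) (f ((π ^ i) y)) := fun x y => by
    simp only [signLT_iff_mul_lt_mul]
    exact exists_congr fun i => and_congr_left' <| forall₂_congr fun j _ =>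
      mul_right_inj' (Units.ne_zero (ε ^ j))
  rcases Int.units_eq_one_or δ with rfl | rfl
  · simp only [signLT_one, one_mul]
    exact lt_iff x y
  · simp only [signLT_neg, signLT_one, neg_one_mul]
    exact (lt_iff y x).trans <| exists_congr fun i => and_congr_left' <| forall₂_congr fun j _ =>
      eq_comm

theorem signLT_signedWord_apply (hf : f x = f y)
    (h : signedWord ε f π x < signedWord ε f π y) :
    SignLT ε (signedWord ε f π (π x)) (signedWord ε f π (π y)) := by
  obtain ⟨_ | i, hlt, hi⟩ := signLT_signedWord_iff.1 (signLT_one.2 h)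
  · exact absurd hf (by simpa using hi.ne)
  · refine signLT_signedWord_iff.2 ⟨i, fun j hj => ?_, ?_⟩
    · simpa only [pow_succ, Perm.mul_apply] using hlt (j + 1) (Nat.succ_lt_succ hj)
    · simpa only [one_mul, pow_succ' ε, pow_succ π, Perm.mul_apply] using hi

theorem le_of_signedWord_le (h : signedWord ε f π x ≤ signedWord ε f π y) : f x ≤ f y := by
  rcases h.eq_or_lt with heq | hlt
  · exact le_of_eq (by simpa [signedWord] using congrFun heq 0)
  obtain ⟨_ | i, hi, hlt⟩ := signLT_signedWord_iff.1 (signLT_one.2 hlt)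
  · simpa using (signLT_one.1 (by simpa using hlt)).le
  · simpa using (hi 0 i.succ_pos).le

theorem FiberMono.monotone_signedWord [LinearOrder α] (h : FiberMono ε f π) (hf : Monotone f) :
    Monotone (signedWord ε f π) := by
  intro x y hxy
  by_contra! hlt
  have hxy : x < y := hxy.lt_of_ne (by rintro rfl; exact lt_irrefl _ hlt)
  obtain ⟨i, heq, hi⟩ := signLT_signedWord_iff.1 (signLT_one.2 hlt)
  rw [one_mul] at hi
  exact (h.signLT_pow_apply hxy fun j hj => (heq j hj).symm).not_signLT_of_monotone hf hi

theorem signedWord_conj {g : Perm α} (hg : ∀ x, f (g x) = f x) (x : α) :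
    signedWord ε f (g * π * g⁻¹) (g x) = signedWord ε f π x := by
  simp [signedWord, conj_pow, hg]

/-- Both families of signed words are weakly increasing rearrangements of each other, hence equal,
so that `π` and its conjugate have the same colour words. -/
theorem FiberMono.conj_eq {n : ℕ} {f : Fin n → ℤ} {π g : Perm (Fin n)} (hf : Monotone f)
    (hg : ∀ x, f (g x) = f x) (hπ : FiberMono ε f π) (hπ' : FiberMono ε f (g * π * g⁻¹)) :
    g * π * g⁻¹ = π := by
  have hcomp : signedWord ε f (g * π * g⁻¹) ∘ g = signedWord ε f π := funext (signedWord_conj hg)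
  have hmono := hπ.monotone_signedWord hf
  rw [← hcomp] at hmono
  have hsw : signedWord ε f (g * π * g⁻¹) ∘ g = signedWord ε f (g * π * g⁻¹) :=
    Tuple.unique_monotone (τ := 1) hmono (hπ'.monotone_signedWord hf)
  exact hπ'.eq_of_colorWord_eq hπ fun x =>
    signedWord_eq_iff.1 (congrFun (hsw.symm.trans hcomp) x)

end SignedWord

/-! ### Existence of the normal form -/

section TieBreaker

theorem exists_sign_apply_eq_mul {γ : Type*} (σ : Perm γ) (ε : ℤˣ) :
    ∃ t : γ → ℤˣ, ∀ c, (∀ k : ℤ, (σ ^ k) c = c → Even k) → t (σ c) = ε * t c := by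
  let r : γ → γ := fun c => (Quotient.mk (Perm.SameCycle.setoid σ) c).out
  have hr : ∀ c, r (σ c) = r c := fun c => congrArg Quotient.out <|
    Quotient.sound (Perm.sameCycle_apply_left.2 (Perm.SameCycle.refl σ c))
  have hrc : ∀ c, ∃ k : ℤ, (σ ^ k) (r c) = c := fun c =>
    Quotient.mk_out (s := Perm.SameCycle.setoid σ) c
  choose k hk using hrc
  refine ⟨fun c => ε ^ k c, fun c hc => ?_⟩
  have hfix : (σ ^ (k (σ c) - 1 - k c)) c = c := by
    have h : (σ ^ (k (σ c) - 1 - k c)) ((σ ^ k c) (r c)) = σ⁻¹ ((σ ^ k (σ c)) (r (σ c))) := by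
      rw [hr, ← Perm.mul_apply, ← zpow_add, sub_add_cancel, sub_eq_neg_add, zpow_add, zpow_neg_one,
        Perm.mul_apply]
    rwa [hk, hk, Perm.inv_def, Equiv.symm_apply_apply] at h
  obtain ⟨m, hm⟩ := hc _ hfix
  change ε ^ k (σ c) = ε * ε ^ k c
  rw [show k (σ c) = m + m + (1 + k c) by omega, zpow_add, zpow_add, Int.units_mul_self, one_mul,
    zpow_add, zpow_one]

variable {α : Type*} {ε : ℤˣ} {f : α → ℤ} {π : Perm α} {tie : α → ℤ} {x y : α}

/-- An integer labelling that orders the points sharing a colour word, in such a way that `π`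
multiplies the labels of those points by `ε`. -/
def IsTieBreaker (ε : ℤˣ) (f : α → ℤ) (π : Perm α) (tie : α → ℤ) : Prop :=
  ∀ ⦃x y⦄, x ≠ y → colorWord f π x = colorWord f π y → tie x ≠ tie y ∧ tie (π x) = ε * tie x

/-- Points sharing a word lie on different cycles, so an injective numbering of the cycles breaks
ties; it is multiplied by a sign that depends on the word only and alternates under the shift. -/
theorem IsPrimitiveColoring.exists_isTieBreaker [Countable α] (h : IsPrimitiveColoring f π)
    (heven : ∀ x y, ¬ π.SameCycle x y → minimalPeriod π x = minimalPeriod π y →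
      Even (minimalPeriod π x)) (ε : ℤˣ) :
    ∃ tie, IsTieBreaker ε f π tie := by
  obtain ⟨t, ht⟩ := exists_sign_apply_eq_mul (wordShift (β := ℤ)) ε
  obtain ⟨e, he⟩ := exists_injective_nat (Quotient (Perm.SameCycle.setoid π))
  refine ⟨fun x => t (colorWord f π x) * e ⟦x⟧, fun x y hxy hw => ?_⟩
  have hcycle : ¬ π.SameCycle x y := fun hc => hxy (h hc hw)
  have hmk : (⟦π x⟧ : Quotient (Perm.SameCycle.setoid π)) = ⟦x⟧ :=
    Quotient.sound (Perm.sameCycle_apply_left.2 (Perm.SameCycle.refl π x))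
  have hperiod : ∀ k : ℤ, (wordShift ^ k) (colorWord f π x) = colorWord f π x → Even k := by
    intro k hk
    rw [← colorWord_zpow_apply] at hk
    have hfix : (π ^ k) x = x := h (by simp [Perm.SameCycle.refl]) hk
    have hdvd : (minimalPeriod π x : ℤ) ∣ k :=
      (MulAction.zpow_smul_eq_iff_minimalPeriod_dvd (a := π) (b := x)).1 hfix
    exact ((Int.even_coe_nat _).2 (heven x y hcycle (h.minimalPeriod_eq hw))).trans_dvd hdvd
  constructor
  · intro htie
    simp only [hw] at htie
    have hec := mul_left_cancel₀ (Units.ne_zero _) htie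
    exact hcycle (Quotient.exact (he (mod_cast hec)))
  · simp only [colorWord_apply, ht _ hperiod, hmk, Units.val_mul, mul_assoc]

/-- The key by which the points are sorted in order to make `π` monotone on the fibres of `f`. -/
def sortKey (ε : ℤˣ) (f : α → ℤ) (π : Perm α) (tie : α → ℤ) (x : α) : Lex (ℕ → ℤ) ×ₗ ℤ :=
  toLex (signedWord ε f π x, tie x)

theorem le_of_sortKey_lt (h : sortKey ε f π tie x < sortKey ε f π tie y) : f x ≤ f y :=
  le_of_signedWord_le (Prod.Lex.monotone_fst _ _ h.le)

variable [Finite α]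

theorem IsTieBreaker.sortKey_injective (htie : IsTieBreaker ε f π tie) :
    Injective (sortKey ε f π tie) := by
  intro x y hxy
  obtain ⟨hw, ht⟩ := Prod.ext_iff.1 (toLex_inj.1 hxy)
  by_contra hne
  exact (htie hne (signedWord_eq_iff.1 hw)).1 ht

theorem IsTieBreaker.signLT_sortKey_apply (htie : IsTieBreaker ε f π tie) (hf : f x = f y)
    (h : sortKey ε f π tie x < sortKey ε f π tie y) :
    SignLT ε (sortKey ε f π tie (π x)) (sortKey ε f π tie (π y)) := by
  have hne : x ≠ y := by rintro rfl; exact lt_irrefl _ h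
  rw [sortKey, sortKey, signLT_toLex_iff]
  rcases Prod.Lex.toLex_lt_toLex.1 h with hlt | ⟨heq, hlt⟩
  · exact Or.inl (signLT_signedWord_apply hf hlt)
  · have hw := signedWord_eq_iff.1 heq
    refine Or.inr ⟨signedWord_eq_iff.2 (by rw [colorWord_apply, colorWord_apply, hw]), ?_⟩
    rw [(htie hne hw).2, (htie hne.symm hw.symm).2, signLT_iff_mul_lt_mul, ← mul_assoc,
      ← mul_assoc, ← Units.val_mul, Int.units_mul_self, Units.val_one, one_mul, one_mul]
    exact hlt

end TieBreaker

section Existence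

variable {n : ℕ} {ε : ℤˣ}

/-- Conjugate by the permutation that sorts the points by `K`. -/
theorem exists_conj_fiberMono_of_key {β κ : Type*} [LinearOrder β] [LinearOrder κ] {f : Fin n → β}
    {π : Perm (Fin n)} {K : Fin n → κ} (hf : Monotone f) (hK : Injective K)
    (hKf : ∀ x y, K x < K y → f x ≤ f y)
    (hKπ : ∀ x y, f x = f y → K x < K y → SignLT ε (K (π x)) (K (π y))) :
    ∃ g : Perm (Fin n), (∀ x, f (g x) = f x) ∧ FiberMono ε f (g * π * g⁻¹) := by
  let σ := Tuple.sort K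
  have hσ : StrictMono (K ∘ σ) :=
    (Tuple.monotone_sort K).strictMono_of_injective (hK.comp σ.injective)
  have hfσ_mono : Monotone (f ∘ σ) := monotone_iff_forall_lt.2 fun x y hxy => hKf _ _ (hσ hxy)
  have hfσ : ∀ x, f (σ x) = f x :=
    congrFun (Tuple.unique_monotone (σ := σ) (τ := 1) hfσ_mono hf)
  refine ⟨σ⁻¹, fun x => by simpa using (hfσ (σ⁻¹ x)).symm, fun x y hxy hlt => ?_⟩
  rw [← signLT_apply_iff_of_strictMono hσ]
  simpa using hKπ (σ x) (σ y) (by rw [hfσ, hfσ, hxy]) (hσ hlt)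

theorem IsPrimitiveColoring.exists_conj_fiberMono {f : Fin n → ℤ} {π : Perm (Fin n)}
    (h : IsPrimitiveColoring f π) (hf : Monotone f)
    (heven : ∀ x y, ¬ π.SameCycle x y → minimalPeriod π x = minimalPeriod π y →
      Even (minimalPeriod π x)) (ε : ℤˣ) :
    ∃ g : Perm (Fin n), (∀ x, f (g x) = f x) ∧ FiberMono ε f (g * π * g⁻¹) := by
  obtain ⟨tie, htie⟩ := h.exists_isTieBreaker heven ε
  exact exists_conj_fiberMono_of_key hf htie.sortKey_injective (fun _ _ => le_of_sortKey_lt)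
    fun _ _ => htie.signLT_sortKey_apply

end Existence

/-! ### Cycle lengths -/

section CycleLength

variable {α : Type*} [Fintype α] [DecidableEq α] {π : Perm α} {x y : α}

theorem orderOf_cycleOf_eq_minimalPeriod : orderOf (π.cycleOf x) = minimalPeriod π x := by
  refine eq_of_forall_dvd fun k => ?_
  rw [orderOf_dvd_iff_pow_eq_one, ← isPeriodicPt_iff_minimalPeriod_dvd,
    isPeriodicPt_iff_pow_apply_eq, ← Perm.cycleOf_pow_apply_self]
  by_cases hx : π x = x
  · simp [(Perm.cycleOf_eq_one_iff π).2 hx]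
  · exact (Perm.isCycle_cycleOf π hx).pow_eq_one_iff' (by simpa using hx)

theorem card_support_cycleOf_eq_minimalPeriod (hx : π x ≠ x) :
    (π.cycleOf x).support.card = minimalPeriod π x := by
  rw [← (Perm.isCycle_cycleOf π hx).orderOf, orderOf_cycleOf_eq_minimalPeriod]

theorem minimalPeriod_mem_parts_partition (π : Perm α) (x : α) :
    minimalPeriod π x ∈ π.partition.parts := by
  rw [Perm.parts_partition, Multiset.mem_add]
  by_cases hx : π x = x
  · have hcard : π.support.card < Fintype.card α :=
      Finset.card_lt_univ_of_notMem (x := x) (by simpa using hx)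
    exact Or.inr (Multiset.mem_replicate.2
      ⟨(Nat.sub_pos_of_lt hcard).ne', minimalPeriod_eq_one_iff_isFixedPt.2 hx⟩)
  · rw [← card_support_cycleOf_eq_minimalPeriod hx, Perm.cycleType_def]
    exact Or.inl (Multiset.mem_map_of_mem _
      (Perm.cycleOf_mem_cycleFactorsFinset_iff.2 (Perm.mem_support.2 hx)))

theorem one_lt_count_one_parts_partition (hx : π x = x) (hy : π y = y) (hxy : x ≠ y) :
    1 < π.partition.parts.count 1 := by
  rw [Perm.parts_partition, Multiset.count_add, Multiset.count_replicate_self,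
    ← Finset.card_compl]
  refine Nat.lt_add_left _ (Finset.one_lt_card.2 ⟨x, ?_, y, ?_, hxy⟩) <;> simpa

theorem one_lt_count_minimalPeriod_parts_partition_of_ne (hx : π x ≠ x) (hy : π y ≠ y)
    (hxy : ¬ π.SameCycle x y) (h : minimalPeriod π x = minimalPeriod π y) :
    1 < π.partition.parts.count (minimalPeriod π x) := by
  have hmem : ∀ {z}, π z ≠ z → π.cycleOf z ∈ π.cycleFactorsFinset := fun hz =>
    Perm.cycleOf_mem_cycleFactorsFinset_iff.2 (Perm.mem_support.2 hz)
  have hne : π.cycleOf x ≠ π.cycleOf y := fun e =>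
    hxy ((Perm.sameCycle_iff_cycleOf_eq_of_mem_support (Perm.mem_support.2 hx)
      (Perm.mem_support.2 hy)).2 e)
  have hcard : 1 < (π.cycleFactorsFinset.filter fun c =>
      minimalPeriod π x = (Finset.card ∘ Perm.support) c).card :=
    Finset.one_lt_card.2
      ⟨π.cycleOf x, Finset.mem_filter.2
          ⟨hmem hx, (card_support_cycleOf_eq_minimalPeriod hx).symm⟩,
        π.cycleOf y, Finset.mem_filter.2
          ⟨hmem hy, h.trans (card_support_cycleOf_eq_minimalPeriod hy).symm⟩, hne⟩
  rw [Perm.parts_partition, Multiset.count_add, Perm.cycleType_def, Multiset.count_map]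
  exact Nat.lt_add_right _ hcard

theorem one_lt_count_minimalPeriod_parts_partition (hxy : ¬ π.SameCycle x y)
    (h : minimalPeriod π x = minimalPeriod π y) :
    1 < π.partition.parts.count (minimalPeriod π x) := by
  by_cases hx : π x = x
  · have hx1 := minimalPeriod_eq_one_iff_isFixedPt.2 hx
    have hy : π y = y := minimalPeriod_eq_one_iff_isFixedPt.1 (h ▸ hx1)
    rw [hx1]
    exact one_lt_count_one_parts_partition hx hy fun e => hxy (e ▸ Perm.SameCycle.refl π x)
  · have hy : π y ≠ y := fun hy => hx <| minimalPeriod_eq_one_iff_isFixedPt.1 <|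
      h.trans (minimalPeriod_eq_one_iff_isFixedPt.2 hy)
    exact one_lt_count_minimalPeriod_parts_partition_of_ne hx hy hxy h

theorem even_minimalPeriod_of_not_sameCycle
    (hodd : ∀ p ∈ π.partition.parts, Odd p → π.partition.parts.count p = 1)
    (hxy : ¬ π.SameCycle x y) (h : minimalPeriod π x = minimalPeriod π y) :
    Even (minimalPeriod π x) := by
  by_contra hx
  exact (one_lt_count_minimalPeriod_parts_partition hxy h).ne'
    (hodd _ (minimalPeriod_mem_parts_partition π x) (Nat.not_even_iff_odd.1 hx))

end CycleLength

/-! ### Descent and ascent sets -/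

section DescentSets

/-- The descent set (for `ε = 1`) or ascent set (for `ε = -1`) of `π`. -/
def desSet (n : ℕ) (ε : ℤˣ) (π : Perm (Fin n)) : Finset ℕ :=
  (Finset.Icc 1 (n - 1)).filter fun i => SignLT ε (oneLine n π (i + 1)) (oneLine n π i)

/-- The colouring of `[n]` by the number of the block containing a point when `[n]` is cut after
each element of `D`; the point `i` of `[n]` is `i - 1` in `Fin n`. -/
def blockIndex (n : ℕ) (D : Finset ℕ) (x : Fin n) : ℤ :=
  (D.filter fun d => d ≤ x.val).card

/-- The number of peaks of a permutation with descent set `D`. -/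
def peakCount (n : ℕ) (D : Finset ℕ) : ℕ :=
  ((Finset.Icc 2 (n - 1)).filter fun i => i - 1 ∉ D ∧ i ∈ D).card

variable {n : ℕ} {ε : ℤˣ} {π : Perm (Fin n)} {D : Finset ℕ} {i : ℕ}

theorem oneLine_succ (x : Fin n) : oneLine n π (x.val + 1) = (π x).val + 1 :=
  dif_pos ⟨x.val.succ_pos, x.isLt⟩

theorem signLT_oneLine_succ_iff {x y : Fin n} :
    SignLT ε (oneLine n π (x.val + 1)) (oneLine n π (y.val + 1)) ↔ SignLT ε (π x) (π y) := by
  rw [oneLine_succ, oneLine_succ]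
  exact signLT_apply_iff_of_strictMono (f := fun z : Fin n => z.val + 1)
    fun _ _ h => Nat.succ_lt_succ h

theorem mem_desSet :
    i ∈ desSet n ε π ↔ (1 ≤ i ∧ i ≤ n - 1) ∧ SignLT ε (oneLine n π (i + 1)) (oneLine n π i) := by
  rw [desSet, Finset.mem_filter, Finset.mem_Icc]

theorem desSet_subset_Icc : desSet n ε π ⊆ Finset.Icc 1 (n - 1) :=
  Finset.filter_subset _ _

theorem oneLine_injOn : Set.InjOn (oneLine n π) (Set.Icc 1 n) := by
  intro a ha b hb h
  obtain ⟨a, rfl⟩ := Nat.exists_eq_add_of_le' ha.1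
  obtain ⟨b, rfl⟩ := Nat.exists_eq_add_of_le' hb.1
  have hval : (π ⟨a, ha.2⟩).val + 1 = (π ⟨b, hb.2⟩).val + 1 := by
    rwa [← oneLine_succ, ← oneLine_succ]
  simpa [Fin.val_inj] using hval

theorem desSet_neg : desSet n (-ε) π = Finset.Icc 1 (n - 1) \ desSet n ε π := by
  ext i
  rw [Finset.mem_sdiff, mem_desSet, mem_desSet, Finset.mem_Icc, signLT_neg, not_and]
  refine and_congr_right fun hi => ⟨fun h _ => h.asymm, fun h => ?_⟩
  have hne : oneLine n π i ≠ oneLine n π (i + 1) :=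
    oneLine_injOn.ne ⟨hi.1, by omega⟩ ⟨by omega, by omega⟩ i.lt_succ_self.ne
  exact (signLT_or_signLT_of_ne ε hne).resolve_right (h hi)

theorem signLT_oneLine_of_forall_notMem_desSet {a b : ℕ} (ha : 1 ≤ a) (hab : a < b) (hb : b ≤ n)
    (h : ∀ i, a ≤ i → i < b → i ∉ desSet n ε π) :
    SignLT ε (oneLine n π a) (oneLine n π b) := by
  have hstep : ∀ i, a ≤ i → i < b → SignLT ε (oneLine n π i) (oneLine n π (i + 1)) := by
    intro i hai hib
    have hi : i ∈ desSet n (-ε) π := by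
      rw [desSet_neg, Finset.mem_sdiff, Finset.mem_Icc]
      exact ⟨⟨by omega, by omega⟩, h i hai hib⟩
    simpa using (mem_desSet.1 hi).2
  induction b, hab using Nat.le_induction with
  | base => exact hstep a le_rfl a.lt_succ_self
  | succ b hab ih =>
    exact (ih (by omega) (fun i hi hib => h i hi (by omega))
      fun i hi hib => hstep i hi (by omega)).trans (hstep b (by omega) b.lt_succ_self)

theorem filter_le_subset_filter_le {ι : Type*} [LinearOrder ι] (D : Finset ι) {a b : ι}
    (hab : a ≤ b) : (D.filter fun d => d ≤ a) ⊆ D.filter fun d => d ≤ b :=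
  Finset.monotone_filter_right D fun _ _ hd => hd.trans hab

theorem monotone_blockIndex (D : Finset ℕ) : Monotone (blockIndex n D) := fun _ _ hxy =>
  Nat.cast_le.2 (Finset.card_le_card (filter_le_subset_filter_le D hxy))

theorem blockIndex_eq_iff {x y : Fin n} (hxy : x ≤ y) :
    blockIndex n D x = blockIndex n D y ↔ ∀ d ∈ D, d ≤ y.val → d ≤ x.val := by
  have hsub := filter_le_subset_filter_le D (Fin.val_le_of_le hxy)
  rw [blockIndex, blockIndex, Nat.cast_inj]
  refine ⟨fun h d hd hdy => ?_, fun h => congrArg Finset.card ?_⟩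
  · have hmem : d ∈ D.filter fun d => d ≤ x.val := by
      rw [Finset.eq_of_subset_of_card_le hsub h.ge]
      exact Finset.mem_filter.2 ⟨hd, hdy⟩
    exact (Finset.mem_filter.1 hmem).2
  · refine hsub.antisymm fun d hd => ?_
    obtain ⟨hdD, hdy⟩ := Finset.mem_filter.1 hd
    exact Finset.mem_filter.2 ⟨hdD, h d hdD hdy⟩

theorem FiberMono.desSet_subset (h : FiberMono ε (blockIndex n D) π) : desSet n ε π ⊆ D := by
  intro i hi
  obtain ⟨hin, hlt⟩ := mem_desSet.1 hi
  by_contra hD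
  obtain ⟨i, rfl⟩ := Nat.exists_eq_add_of_le' hin.1
  let x : Fin n := ⟨i, by omega⟩
  let y : Fin n := ⟨i + 1, by omega⟩
  have hxy : x < y := Fin.mk_lt_mk.2 i.lt_succ_self
  have hblock : blockIndex n D x = blockIndex n D y := (blockIndex_eq_iff hxy.le).2
    fun d hd hdy => Nat.le_of_lt_succ (hdy.lt_of_ne (ne_of_mem_of_not_mem hd hD))
  exact (signLT_oneLine_succ_iff.2 (h hblock hxy)).asymm hlt

theorem fiberMono_of_desSet_subset (h : desSet n ε π ⊆ D) : FiberMono ε (blockIndex n D) π := by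
  intro x y hf hxy
  rw [blockIndex_eq_iff hxy.le] at hf
  refine signLT_oneLine_succ_iff.1 (signLT_oneLine_of_forall_notMem_desSet (by omega)
    (Nat.succ_lt_succ hxy) y.isLt fun i hxi hiy hi => ?_)
  exact (hf i (h hi) (Nat.le_of_lt_succ hiy)).not_gt hxi

theorem fiberMono_blockIndex_iff : FiberMono ε (blockIndex n D) π ↔ desSet n ε π ⊆ D :=
  ⟨FiberMono.desSet_subset, fiberMono_of_desSet_subset⟩

theorem des_eq_card_desSet (π : Perm (Fin n)) : des n π = (desSet n 1 π).card := by
  simp [des, desSet]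

theorem des_add_card_desSet_neg_one (π : Perm (Fin n)) :
    des n π + (desSet n (-1) π).card = n - 1 := by
  rw [des_eq_card_desSet, desSet_neg, add_comm,
    Finset.card_sdiff_add_card_eq_card desSet_subset_Icc, Nat.card_Icc,
    Nat.add_sub_cancel]

theorem card_desSet_neg_one_eq_iff (hn : 1 ≤ n) {k : ℕ} :
    (desSet n (-1) π).card = k ↔ (des n π : ℤ) = (n : ℤ) - 1 - (k : ℤ) := by
  have h := des_add_card_desSet_neg_one π
  omega

theorem mem_desSet_neg_iff (h1 : 1 ≤ i) (hn : i ≤ n - 1) :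
    i ∈ desSet n (-ε) π ↔ i ∉ desSet n ε π := by
  simp [desSet_neg, h1, hn]

theorem pk_eq_peakCount (π : Perm (Fin n)) : pk n π = peakCount n (desSet n 1 π) := by
  refine congrArg Finset.card (Finset.filter_congr fun i hi => ?_)
  rw [Finset.mem_Icc] at hi
  rw [← mem_desSet_neg_iff (by omega) (by omega), mem_desSet, mem_desSet,
    Nat.sub_add_cancel (by omega), signLT_neg, signLT_one, signLT_one]
  omega

theorem oneLine_revPerm_conj (h1 : 1 ≤ i) (hn : i ≤ n) :
    oneLine n (Fin.revPerm * π * Fin.revPerm⁻¹) i + oneLine n π (n + 1 - i) = n + 1 := by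
  obtain ⟨m, rfl⟩ := Nat.exists_eq_add_of_le' h1
  let x : Fin n := ⟨m, hn⟩
  have hx : n + 1 - (m + 1) = (Fin.rev x).val + 1 := by simp only [x, Fin.val_rev]; omega
  have hπ : (Fin.revPerm * π * Fin.revPerm⁻¹ : Perm (Fin n)) x = Fin.rev (π (Fin.rev x)) := by
    simp [Perm.inv_def]
  rw [hx, oneLine_succ, oneLine_succ (x := x), hπ, Fin.val_rev]
  omega

theorem mem_desSet_revPerm_conj (h1 : 1 ≤ i) (hn : i ≤ n - 1) :
    i ∈ desSet n 1 (Fin.revPerm * π * Fin.revPerm⁻¹) ↔ n - i ∈ desSet n 1 π := by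
  have hi := oneLine_revPerm_conj (π := π) h1 (by omega : i ≤ n)
  have hi' := oneLine_revPerm_conj (π := π) (by omega : 1 ≤ i + 1) (by omega)
  rw [show n + 1 - i = n - i + 1 by omega] at hi
  rw [Nat.add_sub_add_right] at hi'
  rw [mem_desSet, mem_desSet, signLT_one, signLT_one]
  omega

theorem card_filter_Icc_reflect (p : ℕ → Prop) [DecidablePred p] (a b : ℕ) :
    ((Finset.Icc a b).filter fun i => p (a + b - i)).card = ((Finset.Icc a b).filter p).card := by
  have hinv : ∀ i ∈ Finset.Icc a b, a + b - (a + b - i) = i := fun i hi => by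
    rw [Finset.mem_Icc] at hi; omega
  have hmem : ∀ i ∈ Finset.Icc a b, a + b - i ∈ Finset.Icc a b := fun i hi => by
    rw [Finset.mem_Icc] at hi ⊢; omega
  refine Finset.card_nbij' (a + b - ·) (a + b - ·) ?_ ?_ ?_ ?_ <;> intro i hi <;>
    obtain ⟨hi, hp⟩ := Finset.mem_filter.1 hi
  · exact Finset.mem_filter.2 ⟨hmem i hi, hp⟩
  · exact Finset.mem_filter.2 ⟨hmem i hi, by rwa [hinv i hi]⟩
  · exact hinv i hi
  · exact hinv i hi

theorem des_revPerm_conj (π : Perm (Fin n)) :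
    des n (Fin.revPerm * π * Fin.revPerm⁻¹) = des n π := by
  have hdes : ∀ π : Perm (Fin n),
      des n π = ((Finset.Icc 1 (n - 1)).filter (· ∈ desSet n 1 π)).card := fun π => by
    rw [des_eq_card_desSet, Finset.filter_mem_eq_inter,
      Finset.inter_eq_right.2 desSet_subset_Icc]
  rw [hdes, hdes, ← card_filter_Icc_reflect (· ∈ desSet n 1 π)]
  refine congrArg Finset.card (Finset.filter_congr fun i hi => ?_)
  rw [Finset.mem_Icc] at hi
  rw [mem_desSet_revPerm_conj hi.1 hi.2, show 1 + (n - 1) - i = n - i by omega]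

/-- Reversing and complementing turns the valleys of `π` into peaks. -/
theorem pk_revPerm_conj (π : Perm (Fin n)) :
    pk n (Fin.revPerm * π * Fin.revPerm⁻¹) = peakCount n (desSet n (-1) π) := by
  rw [pk_eq_peakCount, peakCount, peakCount,
    ← card_filter_Icc_reflect fun i => i - 1 ∉ desSet n (-1) π ∧ i ∈ desSet n (-1) π]
  refine congrArg Finset.card (Finset.filter_congr fun i hi => ?_)
  rw [Finset.mem_Icc] at hi
  rw [mem_desSet_revPerm_conj (by omega) (by omega), mem_desSet_revPerm_conj (by omega) hi.2,
    mem_desSet_neg_iff (by omega) (by omega), mem_desSet_neg_iff (by omega) (by omega), not_not,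
    show 2 + (n - 1) - i - 1 = n - i by omega, show 2 + (n - 1) - i = n - (i - 1) by omega,
    and_comm]

end DescentSets

/-! ### Equidistribution -/

section Counting

theorem multiset_eq_of_countP_le_eq {ι : Type*} [PartialOrder ι] [WellFoundedLT ι]
    [DecidableLE ι] {M N : Multiset ι} (h : ∀ a, M.countP (· ≤ a) = N.countP (· ≤ a)) : M = N := by
  classical
  ext a
  induction a using WellFoundedLT.induction with
  | _ a ih =>
    have hlt : M.filter (· < a) = N.filter (· < a) := by
      ext b
      rw [Multiset.count_filter, Multiset.count_filter]
      split_ifs with hb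
      exacts [ih b hb, rfl]
    have hcount : ∀ S : Multiset ι,
        S.countP (· ≤ a) = (S.filter (· < a)).countP (· ≤ a) + S.count a := fun S => by
      rw [S.countP_eq_countP_filter_add _ (· < a), Multiset.countP_filter _ (¬ · < a),
        Multiset.count]
      simp only [← eq_iff_le_not_lt, eq_comm]
    have ha := h a
    rwa [hcount M, hcount N, hlt, Nat.add_left_cancel_iff] at ha

variable {n : ℕ} {parts : Multiset ℕ}

/-- The descent sets (for `ε = 1`) or ascent sets (for `ε = -1`), with multiplicity, of the
permutations of cycle type `parts`. -/
def desSets (n : ℕ) (ε : ℤˣ) (parts : Multiset ℕ) : Multiset (Finset ℕ) :=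
  (Finset.univ.filter fun π : Perm (Fin n) => π.partition.parts = parts).val.map (desSet n ε)

theorem natCard_eq_countP_desSets (ε : ℤˣ) (P : Finset ℕ → Prop) [DecidablePred P] :
    Nat.card {π : Perm (Fin n) // π.partition.parts = parts ∧ P (desSet n ε π)} =
      (desSets n ε parts).countP P := by
  rw [desSets, Multiset.countP_map, ← Finset.filter_val, Finset.filter_filter,
    Nat.card_eq_fintype_card, Fintype.card_subtype, Finset.card_val]

theorem natCard_fiberMono_le (h2mod4 : ∀ p ∈ parts, ¬ p ≡ 2 [MOD 4])
    (hodd : ∀ p ∈ parts, Odd p → parts.count p = 1) {f : Fin n → ℤ} (hf : Monotone f)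
    (ε ε' : ℤˣ) :
    Nat.card {π : Perm (Fin n) // π.partition.parts = parts ∧ FiberMono ε f π} ≤
      Nat.card {π : Perm (Fin n) // π.partition.parts = parts ∧ FiberMono ε' f π} := by
  have hex : ∀ π : {π : Perm (Fin n) // π.partition.parts = parts ∧ FiberMono ε f π},
      ∃ g : Perm (Fin n), (∀ x, f (g x) = f x) ∧ FiberMono ε' f (g * π * g⁻¹) := by
    rintro ⟨π, rfl, hπ⟩
    have hprim := hπ.isPrimitiveColoring fun x => h2mod4 _ (minimalPeriod_mem_parts_partition π x)
    exact hprim.exists_conj_fiberMono hf (fun _ _ => even_minimalPeriod_of_not_sameCycle hodd) ε'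
  choose g hg hmono using hex
  refine Nat.card_le_card_of_injective (fun π => ⟨g π * π * (g π)⁻¹, ?_, hmono π⟩) ?_
  · rw [← Perm.partition_eq_of_isConj.1 (isConj_iff.2 ⟨g π, rfl⟩)]
    exact π.2.1
  · intro π₁ π₂ h
    have h : g π₁ * π₁ * (g π₁)⁻¹ = g π₂ * π₂ * (g π₂)⁻¹ := congrArg Subtype.val h
    have hconj : ((g π₂)⁻¹ * g π₁) * π₁ * ((g π₂)⁻¹ * g π₁)⁻¹ = (π₂ : Perm (Fin n)) := calc
      _ = (g π₂)⁻¹ * (g π₁ * π₁ * (g π₁)⁻¹) * g π₂ := by group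
      _ = π₂ := by rw [h]; group
    have hcolor : ∀ x, f (((g π₂)⁻¹ * g π₁) x) = f x := fun x => by
      rw [← hg π₂, Perm.mul_apply, Perm.inv_def, Equiv.apply_symm_apply, hg]
    exact Subtype.ext ((π₁.2.2.conj_eq hf hcolor (hconj ▸ π₂.2.2)).symm.trans hconj)

theorem desSets_eq (h2mod4 : ∀ p ∈ parts, ¬ p ≡ 2 [MOD 4])
    (hodd : ∀ p ∈ parts, Odd p → parts.count p = 1) (ε ε' : ℤˣ) :
    desSets n ε parts = desSets n ε' parts := by
  refine multiset_eq_of_countP_le_eq fun D => ?_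
  have hle := natCard_fiberMono_le (n := n) h2mod4 hodd (monotone_blockIndex D)
  simp only [fiberMono_blockIndex_iff] at hle
  rw [← natCard_eq_countP_desSets, ← natCard_eq_countP_desSets]
  exact (hle ε ε').antisymm (hle ε' ε)

end Counting

theorem stmt0 (n : ℕ) (hn : 1 ≤ n) (lam : n.Partition)
    (h2mod4 : ∀ p ∈ lam.parts, ¬ p ≡ 2 [MOD 4])
    (hodd : ∀ p ∈ lam.parts, Odd p → lam.parts.count p = 1)
    (j k : ℕ) :
    Nat.card {π : Equiv.Perm (Fin n) //
        π.partition.parts = lam.parts ∧ pk n π = j ∧ des n π = k}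
      = Nat.card {π : Equiv.Perm (Fin n) //
        π.partition.parts = lam.parts ∧ pk n π = j ∧ (des n π : ℤ) = (n : ℤ) - 1 - (k : ℤ)} := by
  let P : Finset ℕ → Prop := fun D => peakCount n D = j ∧ D.card = k
  calc Nat.card {π : Perm (Fin n) // π.partition.parts = lam.parts ∧ pk n π = j ∧ des n π = k}
    _ = Nat.card {π : Perm (Fin n) // π.partition.parts = lam.parts ∧ P (desSet n 1 π)} := by
      simp only [P, pk_eq_peakCount, des_eq_card_desSet]
    _ = Nat.card {π : Perm (Fin n) // π.partition.parts = lam.parts ∧ P (desSet n (-1) π)} := by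
      classical
      rw [natCard_eq_countP_desSets, natCard_eq_countP_desSets, desSets_eq h2mod4 hodd 1 (-1)]
    _ = _ := by
      refine Nat.card_congr ((MulAut.conj Fin.revPerm).toEquiv.subtypeEquiv fun π => ?_)
      have hconj : (MulAut.conj Fin.revPerm).toEquiv π = Fin.revPerm * π * Fin.revPerm⁻¹ := rfl
      rw [hconj, ← Perm.partition_eq_of_isConj.1 (isConj_iff.2 ⟨Fin.revPerm, rfl⟩),
        pk_revPerm_conj, des_revPerm_conj, ← card_desSet_neg_one_eq_iff hn]
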